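/- arXiv:2604.10974 — 10 statements merged into one kernel-verified Lean document; each statement's English description precedes it below -/
import Mathlib

section
/- Let X be a nonempty finite set, let p̂ ∈ Δ_X satisfy p̂(x) > 0 for all x, let V : X → ℝ, and let ε > 0. Then the value of the KL-constrained minimization equals the value of the one-dimensional dual: inf { Σ_x p(x) V(x) : p ∈ Δ_X, D(p‖p̂) ≤ ε } = sup_{η > 0} ( −(1/η)·log( Σ_x p̂(x)·e^{−η·V(x)} ) − ε/η ). -/
theorem gibbs_nonneg {X : Type*} [Fintype X] (p q : X → ℝ) (hp : ∀ x, 0 ≤ p x)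
    (hq : ∀ x, 0 < q x) (hps : ∑ x, p x = 1) (hqs : ∑ x, q x = 1) :
    0 ≤ ∑ x, p x * Real.log (p x / q x) := by
  have h : ∑ x, (p x - q x) ≤ ∑ x, p x * Real.log (p x / q x) := by
    apply Finset.sum_le_sum
    intro x _
    rcases (hp x).eq_or_lt with h0 | h0
    · rw [← h0]; simp [(hq x).le]
    · have h1 := Real.log_le_sub_one_of_pos (div_pos (hq x) h0)
      have h2 : Real.log (p x / q x) = - Real.log (q x / p x) := by
        rw [← Real.log_inv, inv_div]
      have h3 : p x * (q x / p x - 1) = q x - p x := by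
        field_simp
      have h4 := mul_le_mul_of_nonneg_left h1 h0.le
      rw [h2]
      linarith
  rw [Finset.sum_sub_distrib, hps, hqs] at h
  linarith

theorem kl_tilt {X : Type*} [Fintype X]
    (phat : X → ℝ) (hpos : ∀ x, 0 < phat x) (V : X → ℝ) (η Z : ℝ) (hZ : 0 < Z)
    (p : X → ℝ) (hp : ∀ x, 0 ≤ p x) (hps : ∑ x, p x = 1) :
    ∑ x, p x * Real.log (p x / phat x) =
      ∑ x, p x * Real.log (p x / (phat x * Real.exp (-η * V x) / Z))
        - η * ∑ x, p x * V x - Real.log Z := by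
  have : Real.log Z = ∑ x, p x * Real.log Z := by rw [← Finset.sum_mul, hps, one_mul]
  rw [this, Finset.mul_sum, ← Finset.sum_sub_distrib, ← Finset.sum_sub_distrib]
  apply Finset.sum_congr rfl
  intro x _
  rcases (hp x).eq_or_lt with h0 | h0
  · rw [← h0]; simp
  · have hx := hpos x
    have he := Real.exp_pos (-η * V x)
    rw [Real.log_div h0.ne' hx.ne', Real.log_div h0.ne' (by positivity),
      Real.log_div (by positivity) hZ.ne', Real.log_mul hx.ne' he.ne', Real.log_exp]
    ring

/-- KL-constrained minimization equals the one-dimensional dual: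
inf { Σ_x p(x) V(x) : p ∈ Δ_X, D(p‖p̂) ≤ ε }
  = sup_{η > 0} ( −(1/η)·log( Σ_x p̂(x)·e^{−η·V(x)} ) − ε/η ). -/
theorem kl_constrained_dual {X : Type*} [Fintype X] [Nonempty X]
    (phat : X → ℝ) (hpos : ∀ x, 0 < phat x) (hsum : ∑ x, phat x = 1)
    (V : X → ℝ) (ε : ℝ) (hε : 0 < ε) :
    sInf {v : ℝ | ∃ p : X → ℝ, (∀ x, 0 ≤ p x) ∧ (∑ x, p x = 1) ∧
        (∑ x, p x * Real.log (p x / phat x)) ≤ ε ∧ v = ∑ x, p x * V x} =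
    sSup {v : ℝ | ∃ η : ℝ, 0 < η ∧
        v = -(1 / η) * Real.log (∑ x, phat x * Real.exp (-η * V x)) - ε / η} := by
  set Z : ℝ → ℝ := fun η => ∑ x, phat x * Real.exp (-η * V x) with hZdef
  have hZ : ∀ η, 0 < Z η := fun η =>
    Finset.sum_pos (fun x _ => mul_pos (hpos x) (Real.exp_pos _)) Finset.univ_nonempty
  set q : ℝ → X → ℝ := fun η x => phat x * Real.exp (-η * V x) / Z η with hqdef
  have hq : ∀ η x, 0 < q η x := fun η x =>
    div_pos (mul_pos (hpos x) (Real.exp_pos _)) (hZ η)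
  have hqs : ∀ η, ∑ x, q η x = 1 := fun η => by
    simp only [hqdef]
    rw [← Finset.sum_div]
    exact div_self (hZ η).ne'
  set D : ℝ → ℝ := fun η => -η * (∑ x, q η x * V x) - Real.log (Z η) with hDdef
  have hD : ∀ η, ∑ x, q η x * Real.log (q η x / phat x) = D η := fun η => by
    rw [kl_tilt phat hpos V η (Z η) (hZ η) (q η) (fun x => (hq η x).le) (hqs η)]
    have : ∑ x, q η x * Real.log (q η x / (phat x * Real.exp (-η * V x) / Z η)) = 0 := by
      apply Finset.sum_eq_zero
      intro x _
      have : q η x / (phat x * Real.exp (-η * V x) / Z η) = 1 := div_self (hq η x).ne'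
      rw [this]; simp
    rw [this]; simp only [hDdef]; ring
  have hD0 : ∀ η, 0 ≤ D η := fun η => by
    rw [← hD]; exact gibbs_nonneg _ _ (fun x => (hq η x).le) hpos (hqs η) hsum
  have hZc : Continuous Z := by fun_prop
  have hDc : Continuous D := by
    have hqc : ∀ x, Continuous fun η => q η x := fun x =>
      Continuous.div (by fun_prop) hZc (fun η => (hZ η).ne')
    have h1 : Continuous fun η => ∑ x, q η x * V x :=
      continuous_finsetSum _ (fun x _ => (hqc x).mul continuous_const)
    exact (continuous_neg.mul h1).sub (hZc.log (fun η => (hZ η).ne'))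
  have hDz : D 0 = 0 := by simp [hDdef, hZdef, hsum]
  have hg : ∀ η, 0 < η → -(1 / η) * Real.log (Z η) - ε / η =
      ∑ x, q η x * V x + (D η - ε) / η := fun η hη => by
    simp only [hDdef]; field_simp; ring
  set A := {v : ℝ | ∃ p : X → ℝ, (∀ x, 0 ≤ p x) ∧ (∑ x, p x = 1) ∧
        (∑ x, p x * Real.log (p x / phat x)) ≤ ε ∧ v = ∑ x, p x * V x} with hA
  set B := {v : ℝ | ∃ η : ℝ, 0 < η ∧ v = -(1 / η) * Real.log (Z η) - ε / η} with hB
  have weak : ∀ a ∈ A, ∀ b ∈ B, b ≤ a := by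
    rintro a ⟨p, hp, hps, hpe, rfl⟩ b ⟨η, hη, rfl⟩
    rw [kl_tilt phat hpos V η (Z η) (hZ η) p hp hps] at hpe
    have := gibbs_nonneg p (q η) hp (hq η) hps (hqs η)
    have h2 : -Real.log (Z η) - ε ≤ η * ∑ x, p x * V x := by
      simp only [hqdef] at this
      linarith
    have h3 : -(1 / η) * Real.log (Z η) - ε / η = (-Real.log (Z η) - ε) / η := by ring
    rw [h3, div_le_iff₀ hη]
    linarith
  have hmemA : ∀ η, D η ≤ ε → ∑ x, q η x * V x ∈ A := fun η h =>
    ⟨q η, fun x => (hq η x).le, hqs η, by rw [hD]; exact h, rfl⟩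
  have hmemB : ∀ η, 0 < η → ∑ x, q η x * V x + (D η - ε) / η ∈ B := fun η h =>
    ⟨η, h, (hg η h).symm⟩
  have hAne : A.Nonempty := ⟨_, hmemA 0 (by rw [hDz]; exact hε.le)⟩
  have hBne : B.Nonempty := ⟨_, hmemB 1 one_pos⟩
  have hAb : BddBelow A := by
    obtain ⟨b, hb⟩ := hBne
    exact ⟨b, fun a ha => weak a ha b hb⟩
  have hBb : BddAbove B := by
    obtain ⟨a, ha⟩ := hAne
    exact ⟨a, fun b hb => weak a ha b hb⟩
  apply le_antisymm
  · by_cases hex : ∃ η, 0 < η ∧ D η = ε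
    · obtain ⟨η, hη, he⟩ := hex
      have h1 := csInf_le hAb (hmemA η he.le)
      have h2 := le_csSup hBb (hmemB η hη)
      rw [he] at h2
      simp only [sub_self, zero_div, add_zero] at h2
      exact h1.trans h2
    · have hlt : ∀ η, 0 < η → D η < ε := by
        intro η hη
        by_contra hcon
        push Not at hcon
        obtain ⟨t, ht, hte⟩ := intermediate_value_Icc hη.le hDc.continuousOn
          (show ε ∈ Set.Icc (D 0) (D η) from ⟨by rw [hDz]; exact hε.le, hcon⟩)
        refine hex ⟨t, lt_of_le_of_ne ht.1 ?_, hte⟩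
        rintro rfl
        rw [hDz] at hte
        exact hε.ne hte
      apply le_of_forall_pos_le_add
      intro δ hδ
      have hη : 0 < ε / δ := div_pos hε hδ
      have h1 := csInf_le hAb (hmemA _ (hlt _ hη).le)
      have h2 := le_csSup hBb (hmemB _ hη)
      have h3 : ε / (ε / δ) = δ := by field_simp
      have h4 := div_nonneg (hD0 (ε / δ)) hη.le
      rw [sub_div, h3] at h2
      linarith
  · exact csSup_le hBne (fun b hb => le_csInf hAne (fun a ha => weak a ha b hb))
end

section
/- Let X be a nonempty finite set, let p̂ ∈ Δ_X satisfy p̂(x) > 0 for all x, let V : X → ℝ, and let ε > 0. Define g(η) = −(1/η)·log Z(η) − ε/η for η > 0, where Z(η) = Σ_x p̂(x) e^{−ηV(x)}. Then g is differentiable on (0,∞), and for every η > 0 its derivative satisfies g'(η) = ( ε − D(p_η‖p̂) ) / η². -/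
/-- Partition function `Z(η) = Σ_x p̂(x) e^{−ηV(x)}`. -/
noncomputable def partitionZ {X : Type*} [Fintype X] (phat V : X → ℝ) (η : ℝ) : ℝ :=
  ∑ x, phat x * Real.exp (-η * V x)

/-- Exponentially tilted distribution `p_η(x) = p̂(x) e^{−ηV(x)} / Z(η)`. -/
noncomputable def tilted {X : Type*} [Fintype X] (phat V : X → ℝ) (η : ℝ) : X → ℝ :=
  fun x => phat x * Real.exp (-η * V x) / partitionZ phat V η

/-- KL divergence `D(p‖q) = Σ_x p(x) log(p(x)/q(x))`. -/
noncomputable def klDiv {X : Type*} [Fintype X] (p q : X → ℝ) : ℝ :=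
  ∑ x, p x * Real.log (p x / q x)

/-- the dual objective `g(η) = −(1/η) log Z(η) − ε/η` is
differentiable on `(0,∞)` with `g'(η) = (ε − D(p_η‖p̂))/η²`. -/
theorem dual_objective_derivative {X : Type*} [Fintype X] [Nonempty X]
    (phat : X → ℝ) (hpos : ∀ x, 0 < phat x) (hsum : ∑ x, phat x = 1)
    (V : X → ℝ) (ε : ℝ) (hε : 0 < ε) :
    ∀ η : ℝ, 0 < η →
      HasDerivAt (fun t : ℝ => -(1 / t) * Real.log (partitionZ phat V t) - ε / t)
        ((ε - klDiv (tilted phat V η) phat) / η ^ 2) η := by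
  intro η hη
  have hZ : 0 < partitionZ phat V η :=
    Finset.sum_pos (fun x _ => mul_pos (hpos x) (Real.exp_pos _)) Finset.univ_nonempty
  have hd : HasDerivAt (fun t : ℝ => partitionZ phat V t)
      (∑ x, phat x * (Real.exp (-η * V x) * (-V x))) η := by
    unfold partitionZ
    refine HasDerivAt.fun_sum fun x _ => ?_
    have h1 : HasDerivAt (fun t : ℝ => -t * V x) (-V x) η := by
      simpa using ((hasDerivAt_id η).neg.mul_const (V x))
    exact h1.exp.const_mul (phat x)
  have hkl : klDiv (tilted phat V η) phat =
      η * (∑ x, phat x * (Real.exp (-η * V x) * (-V x))) / partitionZ phat V η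
        - Real.log (partitionZ phat V η) := by
    have h1 : ∀ x, tilted phat V η x * Real.log (tilted phat V η x / phat x) =
        η / partitionZ phat V η * (phat x * (Real.exp (-η * V x) * (-V x)))
          - Real.log (partitionZ phat V η) / partitionZ phat V η *
            (phat x * Real.exp (-η * V x)) := by
      intro x
      have h2 : tilted phat V η x / phat x
          = Real.exp (-η * V x) / partitionZ phat V η := by
        have := (hpos x).ne'
        unfold tilted
        field_simp
      rw [h2, Real.log_div (Real.exp_pos _).ne' hZ.ne', Real.log_exp]
      unfold tilted
      ring
    unfold klDiv
    rw [Finset.sum_congr rfl fun x _ => h1 x, Finset.sum_sub_distrib, ← Finset.mul_sum,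
      ← Finset.mul_sum]
    change _ - _ * partitionZ phat V η = _
    field_simp
  rw [hkl]
  have hinv := hasDerivAt_inv hη.ne'
  have hg := (hinv.neg.mul (hd.log hZ.ne')).sub (hinv.const_mul ε)
  have hfun : (fun t : ℝ => -(1 / t) * Real.log (partitionZ phat V t) - ε / t) =
      ((-fun y : ℝ => y⁻¹) * fun y => Real.log (partitionZ phat V y)) - fun y => ε * y⁻¹ := by
    funext t
    simp [div_eq_mul_inv]
  rw [hfun]
  refine hg.congr_deriv ?_
  simp only [Pi.neg_apply]
  generalize (∑ x, phat x * (Real.exp (-η * V x) * -V x)) = S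
  have hZ' := hZ.ne'
  generalize Real.log (partitionZ phat V η) = L
  field_simp
  ring
end

section
/- Let X be a nonempty finite set, let p̂ ∈ Δ_X satisfy p̂(x) > 0 for all x, and let V : X → ℝ. Then the map η ↦ D(p_η‖p̂) is differentiable on (0,∞) with derivative η·Var_{p_η}(V) at each η > 0; in particular this derivative is nonnegative, and it equals zero if and only if V is constant on X. -/
/-- Variance of `f` under `p`: `Var_p(f) = Σ_x p(x) f(x)² − (Σ_x p(x) f(x))²`. -/
noncomputable def varUnder {X : Type*} [Fintype X] (p f : X → ℝ) : ℝ :=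
  (∑ x, p x * f x ^ 2) - (∑ x, p x * f x) ^ 2

theorem aux_Z_pos {X : Type*} [Fintype X] [Nonempty X]
    (phat : X → ℝ) (hpos : ∀ x, 0 < phat x) (V : X → ℝ) (t : ℝ) : 0 < partitionZ phat V t := by
  unfold partitionZ
  exact Finset.sum_pos (fun x _ => mul_pos (hpos x) (Real.exp_pos _)) Finset.univ_nonempty

theorem aux_tilted_sum {X : Type*} [Fintype X] [Nonempty X]
    (phat : X → ℝ) (hpos : ∀ x, 0 < phat x) (V : X → ℝ) (t : ℝ) :
    ∑ x, tilted phat V t x = 1 := by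
  unfold tilted
  rw [← Finset.sum_div]
  exact div_self (aux_Z_pos phat hpos V t).ne'

theorem aux_tilted_mul {X : Type*} [Fintype X]
    (phat : X → ℝ) (V f : X → ℝ) (t : ℝ) :
    ∑ x, tilted phat V t x * f x
      = (∑ x, phat x * f x * Real.exp (-t * V x)) / partitionZ phat V t := by
  unfold tilted
  rw [Finset.sum_div]
  exact Finset.sum_congr rfl fun x _ => by ring

theorem aux_kl {X : Type*} [Fintype X] [Nonempty X]
    (phat : X → ℝ) (hpos : ∀ x, 0 < phat x) (V : X → ℝ) (t : ℝ) :
    klDiv (tilted phat V t) phat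
      = -t * ((∑ x, phat x * V x * Real.exp (-t * V x)) / partitionZ phat V t)
        - Real.log (partitionZ phat V t) := by
  have hZ := aux_Z_pos phat hpos V t
  have h : ∀ x, Real.log (tilted phat V t x / phat x)
      = -t * V x - Real.log (partitionZ phat V t) := by
    intro x
    have h1 : tilted phat V t x / phat x = Real.exp (-t * V x) / partitionZ phat V t := by
      have := (hpos x).ne'
      unfold tilted
      field_simp
    rw [h1, Real.log_div (Real.exp_pos _).ne' hZ.ne', Real.log_exp]
  unfold klDiv
  rw [← aux_tilted_mul, Finset.mul_sum]
  simp_rw [h, mul_sub]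
  rw [Finset.sum_sub_distrib, ← Finset.sum_mul, aux_tilted_sum phat hpos V t, one_mul]
  congr 1
  exact Finset.sum_congr rfl fun x _ => by ring

theorem aux_deriv {X : Type*} [Fintype X] (c V : X → ℝ) (t : ℝ) :
    HasDerivAt (fun t : ℝ => ∑ x, c x * Real.exp (-t * V x))
      (-∑ x, c x * V x * Real.exp (-t * V x)) t := by
  rw [← Finset.sum_neg_distrib]
  refine HasDerivAt.fun_sum fun x _ => ?_
  have h := ((((hasDerivAt_id t).neg).mul_const (V x)).exp).const_mul (c x)
  refine h.congr_deriv ?_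
  simp
  ring

theorem aux_var {X : Type*} [Fintype X] (p f : X → ℝ) (h : ∑ x, p x = 1) :
    varUnder p f = ∑ x, p x * (f x - ∑ y, p y * f y) ^ 2 := by
  unfold varUnder
  set m := ∑ y, p y * f y with hm
  have : ∀ x, p x * (f x - m) ^ 2 = p x * f x ^ 2 - 2 * m * (p x * f x) + m ^ 2 * p x := by
    intro x; ring
  simp_rw [this]
  rw [Finset.sum_add_distrib, Finset.sum_sub_distrib, ← Finset.mul_sum, ← Finset.mul_sum, h, ← hm]
  ring

/-- `η ↦ D(p_η‖p̂)` is differentiable on `(0,∞)` with derivative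
`η·Var_{p_η}(V)`; this derivative is nonnegative, and it is zero iff `V` is constant. -/
theorem kl_of_tilted_derivative {X : Type*} [Fintype X] [Nonempty X]
    (phat : X → ℝ) (hpos : ∀ x, 0 < phat x) (hsum : ∑ x, phat x = 1)
    (V : X → ℝ) :
    ∀ η : ℝ, 0 < η →
      HasDerivAt (fun t : ℝ => klDiv (tilted phat V t) phat)
        (η * varUnder (tilted phat V η) V) η ∧
      0 ≤ η * varUnder (tilted phat V η) V ∧
      (η * varUnder (tilted phat V η) V = 0 ↔ ∀ x y : X, V x = V y) := by
  intro η hη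
  have hZ := aux_Z_pos phat hpos V η
  have hp : ∀ x, 0 < tilted phat V η x := fun x =>
    div_pos (mul_pos (hpos x) (Real.exp_pos _)) hZ
  have hs := aux_tilted_sum phat hpos V η
  have hv := aux_var (tilted phat V η) V hs
  have hnn : ∀ x ∈ Finset.univ, 0 ≤ tilted phat V η x *
      (V x - ∑ y, tilted phat V η y * V y) ^ 2 :=
    fun x _ => mul_nonneg (hp x).le (sq_nonneg _)
  refine ⟨?_, ?_, ?_⟩
  · have e : (fun t : ℝ => klDiv (tilted phat V t) phat) = _ :=
      funext fun t => aux_kl phat hpos V t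
    rw [e]
    have dZ : HasDerivAt (fun t => partitionZ phat V t)
      (-∑ x, phat x * V x * Real.exp (-η * V x)) η := aux_deriv phat V η
    have dM := aux_deriv (fun x => phat x * V x) V η
    have d := (((hasDerivAt_id η).neg).mul (dM.div dZ hZ.ne')).sub (dZ.log hZ.ne')
    refine d.congr_deriv ?_
    unfold varUnder
    rw [aux_tilted_mul phat V V, aux_tilted_mul phat V (fun x => V x ^ 2)]
    have e2 : ∑ x, phat x * V x ^ 2 * Real.exp (-η * V x)
        = ∑ x, phat x * V x * V x * Real.exp (-η * V x) :=
      Finset.sum_congr rfl fun x _ => by ring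
    rw [e2]
    simp only [Pi.neg_apply, Pi.div_apply, id]
    generalize (∑ x, phat x * V x * V x * Real.exp (-η * V x)) = S
    generalize (∑ x, phat x * V x * Real.exp (-η * V x)) = M
    field_simp
    ring
  · rw [hv]
    exact mul_nonneg hη.le (Finset.sum_nonneg hnn)
  · rw [mul_eq_zero, or_iff_right hη.ne', hv, Finset.sum_eq_zero_iff_of_nonneg hnn]
    constructor
    · intro h
      have h' : ∀ x, V x = ∑ y, tilted phat V η y * V y := fun x => by
        have h1 := (mul_eq_zero.mp (h x (Finset.mem_univ x))).resolve_left (hp x).ne'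
        exact sub_eq_zero.mp (pow_eq_zero_iff two_ne_zero |>.mp h1)
      intro x y
      rw [h' x, h' y]
    · intro h x _
      have : ∑ y, tilted phat V η y * V y = V x := by
        simp_rw [h _ x]
        rw [← Finset.sum_mul, hs, one_mul]
      rw [this]
      simp
end

section
/- In a finite robust MDP in which each uncertainty set P(s,a) is a nonempty compact subset of Δ_S (viewed as a subset of ℝ^S), for any stationary policy π there exists a stationary worst-case transition kernel p^wc with p^wc(·|s,a) ∈ P(s,a) for every (s,a) such that the unique fixed point V^π_P of the robust evaluation operator T^π_P coincides with the unique fixed point of the standard evaluation operator (T^π_{p^wc} V)(s) = Σ_a π(a|s) [ r(s,a) + γ Σ_{s'} p^wc(s'|s,a) V(s') ]; that is, V^π_P(s) = V^π_{p^wc}(s) for all s ∈ S. -/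
/-- Robust evaluation operator
`(T^π_P V)(s) = Σ_a π(a|s) [ r(s,a) + γ inf_{p ∈ P(s,a)} Σ_{s'} p(s') V(s') ]`. -/
noncomputable def robustEval {S A : Type*} [Fintype S] [Fintype A]
    (r : S → A → ℝ) (γ : ℝ) (P : S → A → Set (S → ℝ)) (π : S → A → ℝ)
    (V : S → ℝ) : S → ℝ :=
  fun s => ∑ a, π s a *
    (r s a + γ * sInf {v : ℝ | ∃ p ∈ P s a, v = ∑ s', p s' * V s'})

/-- Standard evaluation operator for a fixed transition kernel `p`:
`(T^π_p V)(s) = Σ_a π(a|s) [ r(s,a) + γ Σ_{s'} p(s'|s,a) V(s') ]`. -/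
noncomputable def stdEval {S A : Type*} [Fintype S] [Fintype A]
    (r : S → A → ℝ) (γ : ℝ) (p : S → A → S → ℝ) (π : S → A → ℝ)
    (V : S → ℝ) : S → ℝ :=
  fun s => ∑ a, π s a * (r s a + γ * ∑ s', p s a s' * V s')

theorem std_oneSided {S A : Type*} [Fintype S] [Fintype A]
    (r : S → A → ℝ) (γ : ℝ) (hγ0 : 0 < γ)
    (p : S → A → S → ℝ) (hp : ∀ s a, (∀ s', 0 ≤ p s a s') ∧ (∑ s', p s a s' = 1))
    (π : S → A → ℝ) (hπnn : ∀ s a, 0 ≤ π s a) (hπsum : ∀ s, ∑ a, π s a = 1)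
    (U V : S → ℝ) (M : ℝ) (h : ∀ s, U s - V s ≤ M) (s : S) :
    stdEval r γ p π U s - stdEval r γ p π V s ≤ γ * M := by
  unfold stdEval
  rw [← Finset.sum_sub_distrib]
  calc _ ≤ ∑ a, π s a * (γ * M) := by
        refine Finset.sum_le_sum fun a _ => ?_
        rw [← mul_sub]
        refine mul_le_mul_of_nonneg_left ?_ (hπnn s a)
        have h1 : ∑ s', p s a s' * U s' - ∑ s', p s a s' * V s' ≤ M := by
          rw [← Finset.sum_sub_distrib]
          calc _ ≤ ∑ s', p s a s' * M := by
                refine Finset.sum_le_sum fun s' _ => ?_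
                rw [← mul_sub]
                exact mul_le_mul_of_nonneg_left (h s') ((hp s a).1 s')
            _ = M := by rw [← Finset.sum_mul, (hp s a).2, one_mul]
        have := mul_le_mul_of_nonneg_left h1 hγ0.le
        linarith
    _ = γ * M := by rw [← Finset.sum_mul, hπsum, one_mul]

theorem fixed_of_oneSided {S : Type*} [Fintype S] (γ : ℝ) (hγ0 : 0 < γ) (hγ1 : γ < 1)
    (T : (S → ℝ) → S → ℝ)
    (hT : ∀ U V M, (∀ s, U s - V s ≤ M) → ∀ s, T U s - T V s ≤ γ * M) :
    ∃ V, T V = V ∧ ∀ W, T W = W → W = V := by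
  have hc : ContractingWith ⟨γ, hγ0.le⟩ T := by
    refine ⟨by exact_mod_cast hγ1, LipschitzWith.of_dist_le_mul fun U V => ?_⟩
    have hd : ∀ s, |U s - V s| ≤ dist U V := fun s => by
      rw [← Real.dist_eq]; exact dist_le_pi_dist U V s
    change _ ≤ γ * dist U V
    rw [dist_pi_le_iff (mul_nonneg hγ0.le dist_nonneg)]
    intro s
    rw [Real.dist_eq, abs_sub_le_iff]
    exact ⟨hT U V _ (fun s => (abs_sub_le_iff.1 (hd s)).1) s,
      hT V U _ (fun s => (abs_sub_le_iff.1 (hd s)).2) s⟩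
  exact ⟨_, hc.fixedPoint_isFixedPt, fun W hW => hc.fixedPoint_unique hW⟩

theorem exists_worst {S A : Type*} [Fintype S] [Fintype A]
    (r : S → A → ℝ) (γ : ℝ) (hγ0 : 0 < γ)
    (P : S → A → Set (S → ℝ))
    (hPne : ∀ s a, (P s a).Nonempty)
    (hPcompact : ∀ s a, IsCompact (P s a))
    (π : S → A → ℝ) (hπnn : ∀ s a, 0 ≤ π s a) (V : S → ℝ) :
    ∃ q : S → A → S → ℝ, (∀ s a, q s a ∈ P s a) ∧
      robustEval r γ P π V = stdEval r γ q π V ∧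
      ∀ p : S → A → S → ℝ, (∀ s a, p s a ∈ P s a) →
        ∀ s, robustEval r γ P π V s ≤ stdEval r γ p π V s := by
  have key : ∀ s a, ∃ q ∈ P s a, ∀ p ∈ P s a, ∑ s', q s' * V s' ≤ ∑ s', p s' * V s' := by
    intro s a
    obtain ⟨q, hq, hm⟩ := (hPcompact s a).exists_isMinOn (hPne s a)
      (f := fun p : S → ℝ => ∑ s', p s' * V s') (by fun_prop)
    exact ⟨q, hq, fun p hp => hm hp⟩
  choose q hq hm using key
  have hinf : ∀ s a, sInf {v : ℝ | ∃ p ∈ P s a, v = ∑ s', p s' * V s'}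
      = ∑ s', q s a s' * V s' := by
    intro s a
    refine IsLeast.csInf_eq ⟨⟨q s a, hq s a, rfl⟩, ?_⟩
    rintro v ⟨p, hp, rfl⟩
    exact hm s a p hp
  have heq : robustEval r γ P π V = stdEval r γ q π V := by
    funext s
    simp only [robustEval, stdEval, hinf]
  refine ⟨q, hq, heq, fun p hp s => ?_⟩
  rw [heq]
  unfold stdEval
  refine Finset.sum_le_sum fun a _ => mul_le_mul_of_nonneg_left ?_ (hπnn s a)
  have := mul_le_mul_of_nonneg_left (hm s a _ (hp s a)) hγ0.le
  linarith

/-- if every uncertainty set `P(s,a)` is a nonempty compact subset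
of the simplex, then for any stationary policy there is a stationary worst-case
kernel `p^wc` with `p^wc(·|s,a) ∈ P(s,a)` such that the unique fixed point of the
robust evaluation operator coincides with the unique fixed point of the standard
evaluation operator under `p^wc`. -/
theorem robust_worst_case_kernel {S A : Type*} [Fintype S] [Fintype A]
    [Nonempty S] [Nonempty A]
    (r : S → A → ℝ) (γ : ℝ) (hγ0 : 0 < γ) (hγ1 : γ < 1)
    (P : S → A → Set (S → ℝ))
    (hPne : ∀ s a, (P s a).Nonempty)
    (hPcompact : ∀ s a, IsCompact (P s a))
    (hPsimplex : ∀ s a, ∀ p ∈ P s a, (∀ s', 0 ≤ p s') ∧ (∑ s', p s' = 1))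
    (π : S → A → ℝ) (hπnn : ∀ s a, 0 ≤ π s a) (hπsum : ∀ s, ∑ a, π s a = 1) :
    ∃ pwc : S → A → S → ℝ, (∀ s a, pwc s a ∈ P s a) ∧
      ∃ Vf : S → ℝ,
        robustEval r γ P π Vf = Vf ∧
        stdEval r γ pwc π Vf = Vf ∧
        (∀ W : S → ℝ, robustEval r γ P π W = W → W = Vf) ∧
        (∀ W : S → ℝ, stdEval r γ pwc π W = W → W = Vf) := by
  obtain ⟨Vf, hV, hVu⟩ := fixed_of_oneSided γ hγ0 hγ1 (robustEval r γ P π) (by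
    intro U V M h s
    obtain ⟨q, hq, heq, -⟩ := exists_worst r γ hγ0 P hPne hPcompact π hπnn V
    obtain ⟨-, -, -, hle⟩ := exists_worst r γ hγ0 P hPne hPcompact π hπnn U
    have h1 := hle q hq s
    have h2 := std_oneSided r γ hγ0 q (fun s a => hPsimplex s a _ (hq s a)) π hπnn hπsum U V M h s
    rw [heq]
    linarith)
  obtain ⟨q, hq, heq, -⟩ := exists_worst r γ hγ0 P hPne hPcompact π hπnn Vf
  obtain ⟨V', -, hu⟩ := fixed_of_oneSided γ hγ0 hγ1 (stdEval r γ q π)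
    (fun U V M h s =>
      std_oneSided r γ hγ0 q (fun s a => hPsimplex s a _ (hq s a)) π hπnn hπsum U V M h s)
  have hVs : stdEval r γ q π Vf = Vf := heq ▸ hV
  exact ⟨q, hq, Vf, hV, hVs, hVu, fun W hW => (hu W hW).trans (hu Vf hVs).symm⟩
end

section
/- In a finite robust MDP in which each uncertainty set P(s,a) is a nonempty compact subset of Δ_S (viewed as a subset of ℝ^S), the robust optimality operator (T_P V)(s) = max_{a ∈ A} ( r(s,a) + γ inf_{p ∈ P(s,a)} Σ_{s'} p(s') V(s') ) is a γ-contraction in the supremum norm with a unique fixed point V*, and there exists a deterministic stationary policy π* : S → A such that V^{π*}_P = V* and, for every stationary (possibly randomized) policy π and every s ∈ S, V^{π*}_P(s) ≥ V^π_P(s), where V^π_P denotes the unique fixed point of the robust evaluation operator T^π_P. -/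
/-- Robust optimality operator
`(T_P V)(s) = max_a ( r(s,a) + γ inf_{p ∈ P(s,a)} Σ_{s'} p(s') V(s') )`. -/
noncomputable def robustOpt {S A : Type*} [Fintype S] [Fintype A] [Nonempty A]
    (r : S → A → ℝ) (γ : ℝ) (P : S → A → Set (S → ℝ)) (V : S → ℝ) : S → ℝ :=
  fun s => Finset.univ.sup' Finset.univ_nonempty
    (fun a => r s a + γ * sInf {v : ℝ | ∃ p ∈ P s a, v = ∑ s', p s' * V s'})

/-- Bounded-below-ness and shift-monotonicity of the worst-case expectation. -/
theorem robust_inf_le {S : Type*} [Fintype S] (Q : Set (S → ℝ)) (hne : Q.Nonempty)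
    (hQ : ∀ p ∈ Q, (∀ s', 0 ≤ p s') ∧ (∑ s', p s' = 1))
    (V W : S → ℝ) (c : ℝ) (h : ∀ s, V s ≤ W s + c) :
    sInf {v : ℝ | ∃ p ∈ Q, v = ∑ s', p s' * V s'} ≤
      sInf {v : ℝ | ∃ p ∈ Q, v = ∑ s', p s' * W s'} + c := by
  rw [← sub_le_iff_le_add]
  obtain ⟨p0, hp0⟩ := hne
  refine le_csInf ⟨∑ s', p0 s' * W s', p0, hp0, rfl⟩ ?_
  rintro _ ⟨p, hp, rfl⟩
  rw [sub_le_iff_le_add]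
  obtain ⟨hp1, hp2⟩ := hQ p hp
  have hb : BddBelow {v : ℝ | ∃ p ∈ Q, v = ∑ s', p s' * V s'} := by
    refine ⟨-‖V‖, ?_⟩
    rintro _ ⟨q, hq, rfl⟩
    obtain ⟨hq1, hq2⟩ := hQ q hq
    calc -‖V‖ = ∑ s', q s' * (-‖V‖) := by rw [← Finset.sum_mul, hq2, one_mul]
      _ ≤ _ := Finset.sum_le_sum fun i _ => mul_le_mul_of_nonneg_left
        (neg_le_of_abs_le (norm_le_pi_norm V i)) (hq1 i)
  calc _ ≤ ∑ s', p s' * V s' := csInf_le hb ⟨p, hp, rfl⟩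
    _ ≤ ∑ s', p s' * (W s' + c) :=
        Finset.sum_le_sum fun i _ => mul_le_mul_of_nonneg_left (h i) (hp1 i)
    _ = _ := by simp only [mul_add, Finset.sum_add_distrib, ← Finset.sum_mul, hp2, one_mul]

theorem robustOpt_le {S A : Type*} [Fintype S] [Fintype A] [Nonempty A]
    (r : S → A → ℝ) (γ : ℝ) (hγ0 : 0 < γ) (P : S → A → Set (S → ℝ))
    (hPne : ∀ s a, (P s a).Nonempty)
    (hPs : ∀ s a, ∀ p ∈ P s a, (∀ s', 0 ≤ p s') ∧ (∑ s', p s' = 1))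
    (V W : S → ℝ) (c : ℝ) (h : ∀ s, V s ≤ W s + c) (s : S) :
    robustOpt r γ P V s ≤ robustOpt r γ P W s + γ * c := by
  unfold robustOpt
  apply Finset.sup'_le
  intro a _
  have h1 := mul_le_mul_of_nonneg_left
    (robust_inf_le (P s a) (hPne s a) (hPs s a) V W c h) hγ0.le
  have h2 := Finset.le_sup' (fun a => r s a + γ * sInf {v : ℝ | ∃ p ∈ P s a, v = ∑ s', p s' * W s'})
    (Finset.mem_univ a)
  linarith

/-- under nonempty compact uncertainty sets, the robust optimality
operator is a γ-contraction with unique fixed point `V*`, and there is a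
deterministic stationary policy `π*` whose robust value is `V*` and which
dominates every stationary (possibly randomized) policy. -/
theorem robust_optimality {S A : Type*} [Fintype S] [Fintype A]
    [Nonempty S] [Nonempty A] [DecidableEq A]
    (r : S → A → ℝ) (γ : ℝ) (hγ0 : 0 < γ) (hγ1 : γ < 1)
    (P : S → A → Set (S → ℝ))
    (hPne : ∀ s a, (P s a).Nonempty)
    (hPcompact : ∀ s a, IsCompact (P s a))
    (hPsimplex : ∀ s a, ∀ p ∈ P s a, (∀ s', 0 ≤ p s') ∧ (∑ s', p s' = 1)) :
    (∀ V W : S → ℝ,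
      Finset.univ.sup' Finset.univ_nonempty
          (fun s => |robustOpt r γ P V s - robustOpt r γ P W s|) ≤
        γ * Finset.univ.sup' Finset.univ_nonempty (fun s => |V s - W s|)) ∧
    ∃ Vstar : S → ℝ, robustOpt r γ P Vstar = Vstar ∧
      (∀ W : S → ℝ, robustOpt r γ P W = W → W = Vstar) ∧
      ∃ πstar : S → A,
        robustEval r γ P (fun s a => if a = πstar s then (1 : ℝ) else 0) Vstar = Vstar ∧
        ∀ π : S → A → ℝ, (∀ s a, 0 ≤ π s a) → (∀ s, ∑ a, π s a = 1) →
          ∀ Vπ : S → ℝ, robustEval r γ P π Vπ = Vπ → ∀ s, Vπ s ≤ Vstar s := by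
  have key := robustOpt_le r γ hγ0 P hPne hPsimplex
  have contr : ∀ (V W : S → ℝ) (c : ℝ), (∀ s, |V s - W s| ≤ c) →
      ∀ s, |robustOpt r γ P V s - robustOpt r γ P W s| ≤ γ * c := by
    intro V W c h s
    have h1 := key V W c (fun s => by linarith [(abs_le.mp (h s)).2]) s
    have h2 := key W V c (fun s => by linarith [(abs_le.mp (h s)).1]) s
    exact abs_le.mpr ⟨by linarith, by linarith⟩
  have dom : ∀ V W : S → ℝ, (∀ s, V s ≤ robustOpt r γ P V s) → robustOpt r γ P W = W →
      ∀ s, V s ≤ W s := by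
    intro V W hV hW s
    obtain ⟨s0, hs0⟩ := Finite.exists_max (fun s => V s - W s)
    have h1 := key V W (V s0 - W s0) (fun s => by linarith [hs0 s]) s0
    rw [hW] at h1
    have h2 := hV s0
    have h3 := hs0 s
    nlinarith
  refine ⟨?_, ?_⟩
  · intro V W
    apply Finset.sup'_le
    intro s _
    exact contr V W _ (fun s => Finset.le_sup' (fun s => |V s - W s|) (Finset.mem_univ s)) s
  have hc : ContractingWith ⟨γ, hγ0.le⟩ (robustOpt r γ P) := by
    refine ⟨by exact_mod_cast hγ1, LipschitzWith.of_dist_le_mul fun V W => ?_⟩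
    refine (dist_pi_le_iff (by positivity)).mpr fun s => ?_
    exact contr V W (dist V W) (fun s => dist_le_pi_dist V W s) s
  have hfix : robustOpt r γ P (hc.fixedPoint _) = hc.fixedPoint _ := hc.fixedPoint_isFixedPt
  generalize hc.fixedPoint (robustOpt r γ P) = V at hfix
  refine ⟨V, hfix, ?_, ?_⟩
  · intro W hW
    funext s
    exact le_antisymm (dom W V (fun s => (congrFun hW s).ge) hfix s)
      (dom V W (fun s => (congrFun hfix s).ge) hW s)
  have hex : ∀ s, ∃ a, robustOpt r γ P V s =
      r s a + γ * sInf {v : ℝ | ∃ p ∈ P s a, v = ∑ s', p s' * V s'} := by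
    intro s
    obtain ⟨a, _, ha⟩ := Finset.exists_mem_eq_sup' (Finset.univ_nonempty (α := A))
      (fun a => r s a + γ * sInf {v : ℝ | ∃ p ∈ P s a, v = ∑ s', p s' * V s'})
    exact ⟨a, ha⟩
  choose f hf using hex
  refine ⟨f, ?_, ?_⟩
  · funext s
    have h1 := hf s
    rw [hfix] at h1
    simp only [robustEval, ite_mul, one_mul, zero_mul, Finset.sum_ite_eq', Finset.sum_ite_eq,
      Finset.mem_univ, if_true]
    exact h1.symm
  · intro π hπ0 hπ1 U hU
    refine dom U V (fun s => ?_) hfix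
    calc U s = robustEval r γ P π U s := (congrFun hU s).symm
      _ ≤ ∑ a, π s a * robustOpt r γ P U s := by
        refine Finset.sum_le_sum fun a _ => mul_le_mul_of_nonneg_left ?_ (hπ0 s a)
        exact Finset.le_sup' (fun a => r s a + γ * sInf {v : ℝ | ∃ p ∈ P s a, v = ∑ s', p s' * U s'})
          (Finset.mem_univ a)
      _ = _ := by rw [← Finset.sum_mul, hπ1, one_mul]
end

section
/- Let S and A be nonempty finite sets, r : S×A → ℝ, γ ∈ (0,1), μ_0 ∈ Δ_S, let p and p' be transition kernels with p(·|s,a), p'(·|s,a) ∈ Δ_S for all (s,a), and let π, π' be stationary policies. Let V^π_p be the unique fixed point of the standard evaluation operator under kernel p and policy π, define J(π,p) = Σ_s μ_0(s) V^π_p(s), and define the discounted occupancy measure d^{π'}_{p'}(s) = (1−γ) Σ_{t≥0} γ^t Pr(s_t = s) for the Markov chain with s_0 ~ μ_0, a_t ~ π'(·|s_t), s_{t+1} ~ p'(·|s_t,a_t). Then J(π',p') − J(π,p) = (1/(1−γ)) · Σ_s d^{π'}_{p'}(s) Σ_a π'(a|s) ( r(s,a) + γ Σ_{s'} p'(s'|s,a)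 V^π_p(s') − V^π_p(s) ). -/
/-- performance difference lemma. With `V^π_p` the fixed point of
the evaluation operator under `(π,p)`, `J(π,p) = Σ_s μ₀(s) V^π_p(s)`, state
distributions `μ_t` of the chain driven by `(π',p')`, and occupancy
`d(s) = (1−γ) Σ_t γ^t μ_t(s)`, we have
`J(π',p') − J(π,p) = (1/(1−γ)) Σ_s d(s) Σ_a π'(a|s)
  ( r(s,a) + γ Σ_{s'} p'(s'|s,a) V^π_p(s') − V^π_p(s) )`. -/
theorem performance_difference {S A : Type*} [Fintype S] [Fintype A]
    [Nonempty S] [Nonempty A]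
    (r : S → A → ℝ) (γ : ℝ) (hγ0 : 0 < γ) (hγ1 : γ < 1)
    (μ0 : S → ℝ) (hμ0nn : ∀ s, 0 ≤ μ0 s) (hμ0sum : ∑ s, μ0 s = 1)
    (p p' : S → A → S → ℝ)
    (hp : ∀ s a, (∀ s', 0 ≤ p s a s') ∧ (∑ s', p s a s' = 1))
    (hp' : ∀ s a, (∀ s', 0 ≤ p' s a s') ∧ (∑ s', p' s a s' = 1))
    (π π' : S → A → ℝ)
    (hπ : ∀ s, (∀ a, 0 ≤ π s a) ∧ (∑ a, π s a = 1))
    (hπ' : ∀ s, (∀ a, 0 ≤ π' s a) ∧ (∑ a, π' s a = 1))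
    (Vp : S → ℝ)
    (hVp : ∀ s, Vp s = ∑ a, π s a * (r s a + γ * ∑ s', p s a s' * Vp s'))
    (Vp' : S → ℝ)
    (hVp' : ∀ s, Vp' s = ∑ a, π' s a * (r s a + γ * ∑ s', p' s a s' * Vp' s'))
    (μ : ℕ → S → ℝ) (hμinit : μ 0 = μ0)
    (hμrec : ∀ t s', μ (t + 1) s' = ∑ s, ∑ a, μ t s * π' s a * p' s a s')
    (d : S → ℝ) (hd : ∀ s, d s = (1 - γ) * ∑' t : ℕ, γ ^ t * μ t s) :
    (∑ s, μ0 s * Vp' s) - (∑ s, μ0 s * Vp s) =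
      (1 / (1 - γ)) * ∑ s, d s * ∑ a, π' s a *
        (r s a + γ * (∑ s', p' s a s' * Vp s') - Vp s) := by
  have hnn : ∀ t s, 0 ≤ μ t s := by
    intro t
    induction t with
    | zero => intro s; rw [hμinit]; exact hμ0nn s
    | succ t ih =>
      intro s
      rw [hμrec]
      exact Finset.sum_nonneg fun x _ => Finset.sum_nonneg fun a _ =>
        mul_nonneg (mul_nonneg (ih x) ((hπ' x).1 a)) ((hp' x a).1 s)
  have hsum : ∀ t, ∑ s, μ t s = 1 := by
    intro t
    induction t with
    | zero => rw [hμinit]; exact hμ0sum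
    | succ t ih =>
      simp_rw [hμrec]
      rw [Finset.sum_comm, ← ih]
      refine Finset.sum_congr rfl fun x _ => ?_
      rw [Finset.sum_comm]
      simp_rw [← Finset.mul_sum, (hp' x _).2, mul_one, ← Finset.mul_sum, (hπ' x).2, mul_one]
  have hle : ∀ t s, μ t s ≤ 1 := by
    intro t s
    rw [← hsum t]
    exact Finset.single_le_sum (fun x _ => hnn t x) (Finset.mem_univ s)
  have hS : ∀ s, Summable fun t : ℕ => γ ^ t * μ t s := by
    intro s
    refine Summable.of_nonneg_of_le (fun t => mul_nonneg (by positivity) (hnn t s))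
      (fun t => ?_) (summable_geometric_of_lt_one hγ0.le hγ1)
    exact mul_le_of_le_one_right (by positivity) (hle t s)
  obtain ⟨D, hD⟩ : ∃ D : S → ℝ, ∀ s, D s = ∑' t : ℕ, γ ^ t * μ t s := ⟨_, fun _ => rfl⟩
  have hDrec : ∀ s', D s' = μ0 s' + γ * ∑ s, ∑ a, D s * (π' s a * p' s a s') := by
    intro s'
    have h1 : HasSum (fun t : ℕ => γ * ∑ s, ∑ a, (γ ^ t * μ t s) * (π' s a * p' s a s'))
        (γ * ∑ s, ∑ a, D s * (π' s a * p' s a s')) := by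
      refine HasSum.mul_left _ (hasSum_sum fun s _ => hasSum_sum fun a _ => ?_)
      rw [hD s]
      exact (hS s).hasSum.mul_right _
    rw [hD s', (hS s').tsum_eq_zero_add, ← h1.tsum_eq, hμinit]
    simp only [pow_zero, one_mul]
    congr 1
    refine tsum_congr fun t => ?_
    rw [hμrec, Finset.mul_sum, Finset.mul_sum]
    refine Finset.sum_congr rfl fun x _ => ?_
    rw [Finset.mul_sum, Finset.mul_sum]
    refine Finset.sum_congr rfl fun a _ => ?_
    ring
  have hadv : ∀ s, ∑ a, π' s a * (r s a + γ * (∑ s', p' s a s' * Vp s') - Vp s)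
      = (Vp' s - Vp s) - γ * ∑ a, π' s a * ∑ s', p' s a s' * (Vp' s' - Vp s') := by
    intro s
    have h2 : Vp s = ∑ a, π' s a * Vp s := by rw [← Finset.sum_mul, (hπ' s).2, one_mul]
    conv_rhs => rw [hVp' s, h2]
    rw [Finset.mul_sum, ← Finset.sum_sub_distrib, ← Finset.sum_sub_distrib]
    refine Finset.sum_congr rfl fun a _ => ?_
    simp_rw [mul_sub, Finset.sum_sub_distrib]
    ring
  have hne : (1 - γ) ≠ 0 := by linarith
  have hR : (1 / (1 - γ)) * ∑ s, d s * ∑ a, π' s a *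
        (r s a + γ * (∑ s', p' s a s' * Vp s') - Vp s)
      = ∑ s, D s * ((Vp' s - Vp s) -
          γ * ∑ a, π' s a * ∑ s', p' s a s' * (Vp' s' - Vp s')) := by
    rw [Finset.mul_sum]
    refine Finset.sum_congr rfl fun s _ => ?_
    rw [hadv, hd, ← hD]
    field_simp
  rw [hR]
  have hL : ∑ s, D s * (Vp' s - Vp s) = ∑ s, μ0 s * (Vp' s - Vp s) +
      ∑ s, D s * (γ * ∑ a, π' s a * ∑ s', p' s a s' * (Vp' s' - Vp s')) := by
    have e1 : ∑ s, D s * (Vp' s - Vp s) = ∑ s', (μ0 s' * (Vp' s' - Vp s') +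
        ∑ s, ∑ a, γ * (D s * (π' s a * p' s a s')) * (Vp' s' - Vp s')) := by
      refine Finset.sum_congr rfl fun s' _ => ?_
      conv_lhs => rw [hDrec s']
      rw [add_mul]
      congr 1
      simp_rw [Finset.mul_sum, Finset.sum_mul]
    rw [e1, Finset.sum_add_distrib]
    congr 1
    rw [Finset.sum_comm]
    refine Finset.sum_congr rfl fun s _ => ?_
    rw [Finset.sum_comm]
    simp_rw [Finset.mul_sum]
    refine Finset.sum_congr rfl fun a _ => Finset.sum_congr rfl fun s' _ => ?_
    ring
  simp_rw [mul_sub (D _) (Vp' _ - Vp _)]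
  rw [Finset.sum_sub_distrib, hL, add_sub_cancel_right, ← Finset.sum_sub_distrib]
  exact Finset.sum_congr rfl fun s _ => by ring
end

section
/- Let S and A be nonempty finite sets, let r : S×A → [0,1], γ ∈ (0,1), ε > 0, and let p̂ be a nominal transition kernel with p̂(s'|s,a) > 0 for all s,a,s'. Define the KL-ball uncertainty sets P_ε(s,a) = { p ∈ Δ_S : D(p‖p̂(·|s,a)) ≤ ε }. Then for every stationary policy π and every s ∈ S: 0 ≤ V^π_{p̂}(s) − V^π_{P_ε}(s) ≤ (γ/(1−γ)) · osc(V^π_{p̂}) · √(2ε) ≤ (γ/(1−γ)²) · √(2ε), where V^π_{p̂} is the unique fixed point of the standard evaluation operator under p̂, V^π_{P_ε} is the unique fixed point of the robust evaluation operator with uncertainty sets P_ε, and osc(V) = max_s V(s) − min_s V(s). -/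
theorem avg_le_aux {X : Type*} [Fintype X] (w f : X → ℝ) (c : ℝ) (hw : ∀ x, 0 ≤ w x)
    (hs : ∑ x, w x = 1) (hf : ∀ x, f x ≤ c) : ∑ x, w x * f x ≤ c := by
  calc ∑ x, w x * f x ≤ ∑ x, w x * c :=
        Finset.sum_le_sum fun x _ => mul_le_mul_of_nonneg_left (hf x) (hw x)
    _ = c := by rw [← Finset.sum_mul, hs, one_mul]

theorem le_avg_aux {X : Type*} [Fintype X] (w f : X → ℝ) (c : ℝ) (hw : ∀ x, 0 ≤ w x)
    (hs : ∑ x, w x = 1) (hf : ∀ x, c ≤ f x) : c ≤ ∑ x, w x * f x := by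
  calc c = ∑ x, w x * c := by rw [← Finset.sum_mul, hs, one_mul]
    _ ≤ ∑ x, w x * f x :=
        Finset.sum_le_sum fun x _ => mul_le_mul_of_nonneg_left (hf x) (hw x)

theorem kl_point_aux (p q : ℝ) (hp : 0 ≤ p) (hq : 0 < q) :
    2 * p - 2 * (√p * √q) ≤ p * Real.log (p / q) := by
  rcases hp.eq_or_lt with rfl | hp
  · simp
  have h1 : Real.log (√q / √p) ≤ √q / √p - 1 := Real.log_le_sub_one_of_pos (by positivity)
  have h2 : Real.log (√q / √p) = -(Real.log (p / q)) / 2 := by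
    rw [Real.log_div (by positivity) (by positivity), Real.log_div hp.ne' hq.ne',
      Real.log_sqrt hq.le, Real.log_sqrt hp.le]
    ring
  rw [h2] at h1
  have h3 : p * (√q / √p) = √p * √q := by
    have hs : √p ≠ 0 := by positivity
    field_simp
    rw [Real.sq_sqrt hp.le]
  nlinarith [mul_le_mul_of_nonneg_left h1 hp.le]

theorem pinsker_aux {X : Type*} [Fintype X] (p q V : X → ℝ) (M m ε : ℝ)
    (hp : ∀ x, 0 ≤ p x) (hps : ∑ x, p x = 1) (hq : ∀ x, 0 < q x) (hqs : ∑ x, q x = 1)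
    (hkl : ∑ x, p x * Real.log (p x / q x) ≤ ε) (hM : ∀ x, V x ≤ M) (hm : ∀ x, m ≤ V x)
    (hmM : m ≤ M) (hε : 0 ≤ ε) :
    ∑ x, q x * V x - ∑ x, p x * V x ≤ (M - m) * √(2 * ε) := by
  have hH : ∑ x, (√(q x) - √(p x)) ^ 2 ≤ ε := by
    refine le_trans ?_ hkl
    have h1 := Finset.sum_le_sum (s := Finset.univ)
      fun x _ => kl_point_aux (p x) (q x) (hp x) (hq x)
    have h2 : ∑ x, (√(q x) - √(p x)) ^ 2
        = ∑ x, (2 * p x - 2 * (√(p x) * √(q x))) + (∑ x, q x - ∑ x, p x) := by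
      rw [← Finset.sum_sub_distrib, ← Finset.sum_add_distrib]
      refine Finset.sum_congr rfl fun x _ => ?_
      have := Real.sq_sqrt (hp x)
      have := Real.sq_sqrt (hq x).le
      nlinarith
    rw [h2, hqs, hps]
    linarith
  have hB : ∑ x, ((√(q x) + √(p x)) * (V x - (M + m) / 2)) ^ 2 ≤ (M - m) ^ 2 := by
    calc ∑ x, ((√(q x) + √(p x)) * (V x - (M + m) / 2)) ^ 2
        ≤ ∑ x, (2 * (q x + p x)) * ((M - m) / 2) ^ 2 := by
          refine Finset.sum_le_sum fun x _ => ?_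
          rw [mul_pow]
          have h1 := Real.sq_sqrt (hp x)
          have h2 := Real.sq_sqrt (hq x).le
          have h3 := hp x
          have h4 := hq x
          refine mul_le_mul ?_ ?_ (sq_nonneg _) (by positivity)
          · nlinarith [sq_nonneg (√(q x) - √(p x))]
          · refine sq_le_sq' ?_ ?_ <;> linarith [hM x, hm x]
      _ = (M - m) ^ 2 := by
          rw [← Finset.sum_mul, ← Finset.mul_sum, Finset.sum_add_distrib, hqs, hps]
          ring
  have hE : ∑ x, q x * V x - ∑ x, p x * V x
      = ∑ x, (√(q x) - √(p x)) * ((√(q x) + √(p x)) * (V x - (M + m) / 2)) := by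
    have : ∑ x, (√(q x) - √(p x)) * ((√(q x) + √(p x)) * (V x - (M + m) / 2))
        = ∑ x, (q x * V x - p x * V x - (q x - p x) * ((M + m) / 2)) := by
      refine Finset.sum_congr rfl fun x _ => ?_
      have h1 := Real.sq_sqrt (hp x)
      have h2 := Real.sq_sqrt (hq x).le
      linear_combination (V x - (M + m) / 2) * (h2 - h1)
    rw [this, Finset.sum_sub_distrib, ← Finset.sum_mul, Finset.sum_sub_distrib,
      Finset.sum_sub_distrib, hqs, hps]
    ring
  have hCS := Finset.sum_mul_sq_le_sq_mul_sq Finset.univ (fun x => √(q x) - √(p x))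
    (fun x => (√(q x) + √(p x)) * (V x - (M + m) / 2))
  rw [hE]
  have hMm : 0 ≤ M - m := sub_nonneg.2 hmM
  refine abs_le_of_sq_le_sq' ?_ (by positivity) |>.2
  rw [mul_pow, Real.sq_sqrt (by positivity)]
  refine hCS.trans ((mul_le_mul hH hB (Finset.sum_nonneg fun x _ => sq_nonneg _) hε).trans ?_)
  nlinarith [mul_nonneg hε (sq_nonneg (M - m))]


/-- robust value drop bound for KL-ball uncertainty sets.
`V^π_p̂` is the fixed point of the standard evaluation operator under the nominal
kernel `p̂`, `V^π_{P_ε}` is the fixed point of the robust evaluation operator with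
the KL-ball uncertainty sets `P_ε(s,a) = { p ∈ Δ_S : D(p‖p̂(·|s,a)) ≤ ε }`, and
`osc(V) = max V − min V`. -/
theorem robust_value_drop {S A : Type*} [Fintype S] [Fintype A]
    [Nonempty S] [Nonempty A]
    (r : S → A → ℝ) (hr : ∀ s a, 0 ≤ r s a ∧ r s a ≤ 1)
    (γ : ℝ) (hγ0 : 0 < γ) (hγ1 : γ < 1)
    (ε : ℝ) (hε : 0 < ε)
    (phat : S → A → S → ℝ)
    (hphat_pos : ∀ s a s', 0 < phat s a s')
    (hphat_sum : ∀ s a, ∑ s', phat s a s' = 1)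
    (π : S → A → ℝ) (hπnn : ∀ s a, 0 ≤ π s a) (hπsum : ∀ s, ∑ a, π s a = 1)
    (Vhat : S → ℝ)
    (hVhat : ∀ s, Vhat s = ∑ a, π s a * (r s a + γ * ∑ s', phat s a s' * Vhat s'))
    (Vrob : S → ℝ)
    (hVrob : ∀ s, Vrob s = ∑ a, π s a * (r s a + γ *
      sInf {v : ℝ | ∃ p : S → ℝ, (∀ s', 0 ≤ p s') ∧ (∑ s', p s' = 1) ∧
        (∑ s', p s' * Real.log (p s' / phat s a s')) ≤ ε ∧
        v = ∑ s', p s' * Vrob s'})) :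
    (∀ s, 0 ≤ Vhat s - Vrob s) ∧
    (∀ s, Vhat s - Vrob s ≤ (γ / (1 - γ)) *
      (Finset.univ.sup' Finset.univ_nonempty Vhat -
        Finset.univ.inf' Finset.univ_nonempty Vhat) * Real.sqrt (2 * ε)) ∧
    ((γ / (1 - γ)) *
      (Finset.univ.sup' Finset.univ_nonempty Vhat -
        Finset.univ.inf' Finset.univ_nonempty Vhat) * Real.sqrt (2 * ε) ≤
      (γ / (1 - γ) ^ 2) * Real.sqrt (2 * ε)) := by
  have h1γ : 0 < 1 - γ := by linarith
  set M := Finset.univ.sup' Finset.univ_nonempty Vhat with hMdef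
  set m := Finset.univ.inf' Finset.univ_nonempty Vhat with hmdef
  have hM : ∀ s, Vhat s ≤ M := fun s => Finset.le_sup' Vhat (Finset.mem_univ s)
  have hm : ∀ s, m ≤ Vhat s := fun s => Finset.inf'_le Vhat (Finset.mem_univ s)
  have hmM : m ≤ M := (hm (Classical.arbitrary S)).trans (hM _)
  have hD : ∀ s, Vhat s - Vrob s = ∑ a, π s a * (γ * (∑ s', phat s a s' * Vhat s' -
      sInf {v : ℝ | ∃ p : S → ℝ, (∀ s', 0 ≤ p s') ∧ (∑ s', p s' = 1) ∧
        (∑ s', p s' * Real.log (p s' / phat s a s')) ≤ ε ∧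
        v = ∑ s', p s' * Vrob s'})) := by
    intro s
    rw [hVhat s, hVrob s, ← Finset.sum_sub_distrib]
    refine Finset.sum_congr rfl fun a _ => ?_
    ring
  refine ⟨?_, ?_, ?_⟩
  · obtain ⟨s0, hs0⟩ := Finite.exists_min fun s => Vhat s - Vrob s
    obtain ⟨s1, hs1⟩ := Finite.exists_min Vrob
    have key : γ * (Vhat s0 - Vrob s0) ≤ Vhat s0 - Vrob s0 := by
      conv_rhs => rw [hD s0]
      refine le_avg_aux _ _ _ (hπnn s0) (hπsum s0) fun a => ?_
      refine mul_le_mul_of_nonneg_left ?_ hγ0.le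
      have h1 := le_avg_aux (phat s0 a) (fun s => Vhat s - Vrob s) _
        (fun s => (hphat_pos s0 a s).le) (hphat_sum s0 a) hs0
      have h2 : sInf {v : ℝ | ∃ p : S → ℝ, (∀ s', 0 ≤ p s') ∧ (∑ s', p s' = 1) ∧
        (∑ s', p s' * Real.log (p s' / phat s0 a s')) ≤ ε ∧
        v = ∑ s', p s' * Vrob s'} ≤ ∑ s', phat s0 a s' * Vrob s' := by
        refine csInf_le ⟨Vrob s1, ?_⟩
          ⟨phat s0 a, fun s => (hphat_pos s0 a s).le, hphat_sum s0 a, ?_, rfl⟩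
        · rintro v ⟨p, hp, hps, -, rfl⟩
          exact le_avg_aux p Vrob _ hp hps hs1
        · rw [Finset.sum_eq_zero]
          · exact hε.le
          · intro s _
            rw [div_self (hphat_pos s0 a s).ne', Real.log_one, mul_zero]
      simp only [mul_sub, Finset.sum_sub_distrib] at h1
      linarith
    have h0 : 0 ≤ Vhat s0 - Vrob s0 := by nlinarith
    exact fun s => h0.trans (hs0 s)
  · obtain ⟨s0, hs0⟩ := Finite.exists_max fun s => Vhat s - Vrob s
    have key : Vhat s0 - Vrob s0 ≤ γ * ((M - m) * √(2 * ε) + (Vhat s0 - Vrob s0)) := by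
      conv_lhs => rw [hD s0]
      refine avg_le_aux _ _ _ (hπnn s0) (hπsum s0) fun a => ?_
      refine mul_le_mul_of_nonneg_left ?_ hγ0.le
      rw [sub_le_comm]
      refine le_csInf ?_ ?_
      · refine ⟨_, phat s0 a, fun s => (hphat_pos s0 a s).le, hphat_sum s0 a, ?_, rfl⟩
        rw [Finset.sum_eq_zero]
        · exact hε.le
        · intro s _
          rw [div_self (hphat_pos s0 a s).ne', Real.log_one, mul_zero]
      · rintro v ⟨p, hp, hps, hkl, rfl⟩
        have h1 := avg_le_aux p (fun s => Vhat s - Vrob s) _ hp hps hs0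
        have h2 := pinsker_aux p (phat s0 a) Vhat M m ε hp hps (hphat_pos s0 a)
          (hphat_sum s0 a) hkl hM hm hmM hε.le
        simp only [mul_sub, Finset.sum_sub_distrib] at h1
        linarith
    intro s
    refine (hs0 s).trans ?_
    rw [mul_assoc, div_mul_eq_mul_div, le_div_iff₀ h1γ]
    linarith
  · have hMle : M ≤ 1 + γ * M := by
      refine Finset.sup'_le _ _ fun s _ => ?_
      rw [hVhat s]
      refine avg_le_aux _ _ _ (hπnn s) (hπsum s) fun a => ?_
      have := avg_le_aux (phat s a) Vhat M (fun s' => (hphat_pos s a s').le) (hphat_sum s a) hM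
      have := mul_le_mul_of_nonneg_left this hγ0.le
      linarith [(hr s a).2]
    have hmle : γ * m ≤ m := by
      refine Finset.le_inf' _ _ fun s _ => ?_
      rw [hVhat s]
      refine le_avg_aux _ _ _ (hπnn s) (hπsum s) fun a => ?_
      have := le_avg_aux (phat s a) Vhat m (fun s' => (hphat_pos s a s').le) (hphat_sum s a) hm
      have := mul_le_mul_of_nonneg_left this hγ0.le
      linarith [(hr s a).1]
    refine mul_le_mul_of_nonneg_right ?_ (Real.sqrt_nonneg _)
    have h : M - m ≤ 1 / (1 - γ) := by
      rw [le_div_iff₀ h1γ]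
      linarith
    calc γ / (1 - γ) * (M - m) ≤ γ / (1 - γ) * (1 / (1 - γ)) :=
          mul_le_mul_of_nonneg_left h (by positivity)
      _ = γ / (1 - γ) ^ 2 := by
          field_simp
end

section
/- Let K ≥ 1, let ρ ∈ Δ_{[K]} satisfy ρ(k) > 0 for all k, let h : [K] → ℝ, and let κ > 0. Then min { Σ_k w(k) h(k) : w ∈ Δ_{[K]}, D(w‖ρ) ≤ κ } = sup_{β > 0} ( −(1/β)·log( Σ_k ρ(k)·e^{−β·h(k)} ) − κ/β ). Moreover, if β* > 0 satisfies D(w_{β*}‖ρ) = κ, where w_β(k) = ρ(k)·e^{−β·h(k)} / Σ_j ρ(j)·e^{−β·h(j)}, then w_{β*} attains the minimum on the left-hand side. -/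
/-- Boltzmann weights `w_β(k) = ρ(k) e^{−β h(k)} / Σ_j ρ(j) e^{−β h(j)}`. -/
noncomputable def boltzmannW {K : ℕ} (ρ h : Fin K → ℝ) (β : ℝ) : Fin K → ℝ :=
  fun k => ρ k * Real.exp (-β * h k) / ∑ j, ρ j * Real.exp (-β * h j)

theorem bz_kl_nonneg {K : ℕ} (w q : Fin K → ℝ) (hw : ∀ k, 0 ≤ w k) (hq : ∀ k, 0 < q k)
    (hws : ∑ k, w k = 1) (hqs : ∑ k, q k = 1) : 0 ≤ ∑ k, w k * Real.log (w k / q k) := by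
  have key : ∀ k, w k - q k ≤ w k * Real.log (w k / q k) := by
    intro k
    rcases (hw k).eq_or_lt with h0 | h0
    · rw [← h0]; have := hq k; simp; linarith
    · have h1 := Real.log_le_sub_one_of_pos (div_pos (hq k) h0)
      have h2 : Real.log (w k / q k) = - Real.log (q k / w k) := by
        rw [← Real.log_inv, inv_div]
      rw [h2]
      have h3 := mul_le_mul_of_nonneg_left h1 h0.le
      have h4 : w k * (q k / w k - 1) = q k - w k := by field_simp
      linarith
  have := Finset.sum_le_sum (fun k (_ : k ∈ Finset.univ) => key k)
  rw [Finset.sum_sub_distrib, hws, hqs] at this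
  linarith

theorem bz_Z_pos {K : ℕ} (hK : 1 ≤ K) (ρ h : Fin K → ℝ) (hρ : ∀ k, 0 < ρ k) (β : ℝ) :
    0 < ∑ k, ρ k * Real.exp (-β * h k) :=
  Finset.sum_pos (fun k _ => mul_pos (hρ k) (Real.exp_pos _)) ⟨⟨0, hK⟩, Finset.mem_univ _⟩

theorem bz_W_pos {K : ℕ} (hK : 1 ≤ K) (ρ h : Fin K → ℝ) (hρ : ∀ k, 0 < ρ k) (β : ℝ) (k : Fin K) :
    0 < boltzmannW ρ h β k :=
  div_pos (mul_pos (hρ k) (Real.exp_pos _)) (bz_Z_pos hK ρ h hρ β)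

theorem bz_W_sum {K : ℕ} (hK : 1 ≤ K) (ρ h : Fin K → ℝ) (hρ : ∀ k, 0 < ρ k) (β : ℝ) :
    ∑ k, boltzmannW ρ h β k = 1 := by
  unfold boltzmannW
  rw [← Finset.sum_div]
  exact div_self (ne_of_gt (bz_Z_pos hK ρ h hρ β))

/-- `D(w‖w_β) = D(w‖ρ) + β ⟨w,h⟩ + log Z`. -/
theorem bz_identity {K : ℕ} (hK : 1 ≤ K) (ρ h : Fin K → ℝ) (hρ : ∀ k, 0 < ρ k) (β : ℝ)
    (w : Fin K → ℝ) (hw : ∀ k, 0 ≤ w k) (hws : ∑ k, w k = 1) :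
    ∑ k, w k * Real.log (w k / boltzmannW ρ h β k) =
      ∑ k, w k * Real.log (w k / ρ k) + β * ∑ k, w k * h k
        + Real.log (∑ k, ρ k * Real.exp (-β * h k)) := by
  have hZ := bz_Z_pos hK ρ h hρ β
  have e : ∀ k, w k * Real.log (w k / boltzmannW ρ h β k) = w k * Real.log (w k / ρ k)
      + β * (w k * h k) + w k * Real.log (∑ k, ρ k * Real.exp (-β * h k)) := by
    intro k
    rcases (hw k).eq_or_lt with h0 | h0
    · rw [← h0]; simp
    · rw [Real.log_div h0.ne' (bz_W_pos hK ρ h hρ β k).ne', Real.log_div h0.ne' (hρ k).ne']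
      unfold boltzmannW
      rw [Real.log_div (mul_pos (hρ k) (Real.exp_pos _)).ne' hZ.ne',
        Real.log_mul (hρ k).ne' (Real.exp_pos _).ne', Real.log_exp]
      ring
  rw [Finset.sum_congr rfl (fun k _ => e k), Finset.sum_add_distrib, Finset.sum_add_distrib,
    ← Finset.mul_sum, ← Finset.sum_mul, hws, one_mul]

theorem bz_W_identity {K : ℕ} (hK : 1 ≤ K) (ρ h : Fin K → ℝ) (hρ : ∀ k, 0 < ρ k) (β : ℝ) :
    ∑ k, boltzmannW ρ h β k * Real.log (boltzmannW ρ h β k / ρ k)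
      + β * ∑ k, boltzmannW ρ h β k * h k
        + Real.log (∑ k, ρ k * Real.exp (-β * h k)) = 0 := by
  rw [← bz_identity hK ρ h hρ β _ (fun k => (bz_W_pos hK ρ h hρ β k).le) (bz_W_sum hK ρ h hρ β)]
  exact Finset.sum_eq_zero fun k _ => by
    rw [div_self (bz_W_pos hK ρ h hρ β k).ne', Real.log_one, mul_zero]

theorem bz_cont {K : ℕ} (hK : 1 ≤ K) (ρ h : Fin K → ℝ) (hρ : ∀ k, 0 < ρ k) :
    Continuous fun β => ∑ k, boltzmannW ρ h β k * Real.log (boltzmannW ρ h β k / ρ k) := by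
  have hc : ∀ k, Continuous fun β => boltzmannW ρ h β k := by
    intro k
    unfold boltzmannW
    exact Continuous.div (by fun_prop) (by fun_prop) (fun β => (bz_Z_pos hK ρ h hρ β).ne')
  refine continuous_finsetSum _ fun k _ => (hc k).mul (Continuous.log ((hc k).div_const _) ?_)
  exact fun β => (div_pos (bz_W_pos hK ρ h hρ β k) (hρ k)).ne'

/-- KL-constrained Boltzmann reweighting duality:
`min { Σ_k w(k) h(k) : w ∈ Δ_K, D(w‖ρ) ≤ κ }
  = sup_{β>0} ( −(1/β) log Σ_k ρ(k) e^{−β h(k)} − κ/β )`,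
and any `β* > 0` with `D(w_{β*}‖ρ) = κ` yields a minimizer `w_{β*}`. -/
theorem boltzmann_reweighting_dual {K : ℕ} (hK : 1 ≤ K)
    (ρ : Fin K → ℝ) (hρpos : ∀ k, 0 < ρ k) (hρsum : ∑ k, ρ k = 1)
    (h : Fin K → ℝ) (κ : ℝ) (hκ : 0 < κ) :
    (sInf {v : ℝ | ∃ w : Fin K → ℝ, (∀ k, 0 ≤ w k) ∧ (∑ k, w k = 1) ∧
        (∑ k, w k * Real.log (w k / ρ k)) ≤ κ ∧ v = ∑ k, w k * h k} =
      sSup {v : ℝ | ∃ β : ℝ, 0 < β ∧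
        v = -(1 / β) * Real.log (∑ k, ρ k * Real.exp (-β * h k)) - κ / β}) ∧
    (∀ βstar : ℝ, 0 < βstar →
      (∑ k, boltzmannW ρ h βstar k * Real.log (boltzmannW ρ h βstar k / ρ k)) = κ →
      (∑ k, boltzmannW ρ h βstar k * h k) =
        sInf {v : ℝ | ∃ w : Fin K → ℝ, (∀ k, 0 ≤ w k) ∧ (∑ k, w k = 1) ∧
          (∑ k, w k * Real.log (w k / ρ k)) ≤ κ ∧ v = ∑ k, w k * h k}) := by
  set P := {v : ℝ | ∃ w : Fin K → ℝ, (∀ k, 0 ≤ w k) ∧ (∑ k, w k = 1) ∧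
        (∑ k, w k * Real.log (w k / ρ k)) ≤ κ ∧ v = ∑ k, w k * h k} with hP
  set Q := {v : ℝ | ∃ β : ℝ, 0 < β ∧
        v = -(1 / β) * Real.log (∑ k, ρ k * Real.exp (-β * h k)) - κ / β} with hQ
  have hweak : ∀ p ∈ P, ∀ q ∈ Q, q ≤ p := by
    rintro p ⟨w, hw, hws, hD, rfl⟩ q ⟨β, hβ, rfl⟩
    have h1 := bz_kl_nonneg w _ hw (bz_W_pos hK ρ h hρpos β) hws (bz_W_sum hK ρ h hρpos β)
    rw [bz_identity hK ρ h hρpos β w hw hws] at h1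
    have e : -(1 / β) * Real.log (∑ k, ρ k * Real.exp (-β * h k)) - κ / β
        = (-Real.log (∑ k, ρ k * Real.exp (-β * h k)) - κ) / β := by ring
    rw [e, div_le_iff₀ hβ]
    linarith
  have hPne : P.Nonempty := by
    refine ⟨_, ρ, fun k => (hρpos k).le, hρsum, ?_, rfl⟩
    refine le_trans (le_of_eq (Finset.sum_eq_zero fun k _ => ?_)) hκ.le
    rw [div_self (hρpos k).ne', Real.log_one, mul_zero]
  have hQne : Q.Nonempty := ⟨_, 1, one_pos, rfl⟩
  have hPb : BddBelow P := hQne.elim fun q hq => ⟨q, fun p hp => hweak p hp q hq⟩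
  have hQb : BddAbove Q := hPne.elim fun p hp => ⟨p, fun q hq => hweak p hp q hq⟩
  have hle : sSup Q ≤ sInf P :=
    csSup_le hQne fun q hq => le_csInf hPne fun p hp => hweak p hp q hq
  -- a Boltzmann weight with divergence at most `κ`
  have hfeas : ∀ β : ℝ, (∑ k, boltzmannW ρ h β k * Real.log (boltzmannW ρ h β k / ρ k)) ≤ κ →
      (∑ k, boltzmannW ρ h β k * h k) ∈ P := fun β hD =>
    ⟨_, fun k => (bz_W_pos hK ρ h hρpos β k).le, bz_W_sum hK ρ h hρpos β, hD, rfl⟩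
  have hval : ∀ β : ℝ, 0 < β → (∑ k, boltzmannW ρ h β k * h k) =
      (-(1 / β) * Real.log (∑ k, ρ k * Real.exp (-β * h k)) - κ / β) +
      (κ - ∑ k, boltzmannW ρ h β k * Real.log (boltzmannW ρ h β k / ρ k)) / β := by
    intro β hβ
    have h1 := bz_W_identity hK ρ h hρpos β
    generalize Real.log (∑ k, ρ k * Real.exp (-β * h k)) = L at *
    generalize (∑ k, boltzmannW ρ h β k * h k) = m at *
    field_simp
    linarith
  have hstar : ∀ β : ℝ, 0 < β →
      (∑ k, boltzmannW ρ h β k * Real.log (boltzmannW ρ h β k / ρ k)) = κ →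
      (∑ k, boltzmannW ρ h β k * h k) ≤ sSup Q := by
    intro β hβ hD
    have h1 := hval β hβ
    rw [hD, sub_self, zero_div, add_zero] at h1
    exact le_csSup hQb ⟨β, hβ, h1⟩
  refine ⟨le_antisymm ?_ hle, fun β hβ hD =>
    le_antisymm ((hstar β hβ hD).trans hle) (csInf_le hPb (hfeas β hD.le))⟩
  by_cases hex : ∃ β : ℝ, 0 < β ∧
      (∑ k, boltzmannW ρ h β k * Real.log (boltzmannW ρ h β k / ρ k)) = κ
  · obtain ⟨β, hβ, hD⟩ := hex
    exact (csInf_le hPb (hfeas β hD.le)).trans (hstar β hβ hD)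
  · have h0 : (∑ k, boltzmannW ρ h 0 k * Real.log (boltzmannW ρ h 0 k / ρ k)) = 0 := by
      have := bz_W_identity hK ρ h hρpos 0
      simpa [hρsum] using this
    have hlt : ∀ β : ℝ, 0 < β →
        (∑ k, boltzmannW ρ h β k * Real.log (boltzmannW ρ h β k / ρ k)) ≤ κ := by
      intro β hβ
      by_contra hcon
      obtain ⟨b, hb, hb2⟩ := intermediate_value_Icc hβ.le (bz_cont hK ρ h hρpos).continuousOn
        (show κ ∈ Set.Icc _ _ from ⟨by simpa only [h0] using hκ.le, (not_le.mp hcon).le⟩)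
      refine hex ⟨b, lt_of_le_of_ne hb.1 ?_, hb2⟩
      rintro rfl
      simp only [h0] at hb2
      exact hκ.ne hb2
    refine le_of_forall_pos_le_add fun ε hε => ?_
    have hβ : 0 < κ / ε := div_pos hκ hε
    have h1 := hval _ hβ
    have h2 := csInf_le hPb (hfeas _ (hlt _ hβ))
    have h3 : (-(1 / (κ / ε)) * Real.log (∑ k, ρ k * Real.exp (-(κ / ε) * h k)) - κ / (κ / ε))
      ≤ sSup Q := le_csSup hQb ⟨_, hβ, rfl⟩
    have h4 := bz_kl_nonneg _ ρ (fun k => (bz_W_pos hK ρ h hρpos (κ / ε) k).le) hρpos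
      (bz_W_sum hK ρ h hρpos (κ / ε)) hρsum
    have h5 : (κ - ∑ k, boltzmannW ρ h (κ / ε) k * Real.log (boltzmannW ρ h (κ / ε) k / ρ k))
        / (κ / ε) ≤ ε := by
      rw [div_le_iff₀ hβ, mul_div_cancel₀ _ hε.ne']
      linarith
    linarith
end

section
/- Let X be a nonempty finite set, let p̂ ∈ Δ_X satisfy p̂(x) > 0 for all x, let V : X → ℝ, and let ε ≥ 0. Define r(η) = ε − D(p_η‖p̂) for η > 0, where p_η is the exponentially tilted distribution. Let 0 < η_min and σ_min > 0, and suppose η̂, η* ≥ η_min are such that Var_{p_ξ}(V) ≥ σ_min² for every ξ in the closed interval between η̂ and η*, and r(η*) = 0. Then |η̂ − η*| ≤ |ε − D(p_{η̂}‖p̂)| / (η_min·σ_min²). -/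
lemma partitionZ_pos' {X : Type*} [Fintype X] [Nonempty X] (phat V : X → ℝ)
    (hpos : ∀ x, 0 < phat x) (η : ℝ) : 0 < partitionZ phat V η :=
  Finset.sum_pos (fun x _ => mul_pos (hpos x) (Real.exp_pos _)) Finset.univ_nonempty

lemma klDiv_tilted_eq {X : Type*} [Fintype X] [Nonempty X] (phat V : X → ℝ)
    (hpos : ∀ x, 0 < phat x) (η : ℝ) :
    klDiv (tilted phat V η) phat =
      -η * ((∑ x, phat x * Real.exp (-η * V x) * V x) / partitionZ phat V η)
        - Real.log (partitionZ phat V η) := by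
  have hZ := partitionZ_pos' phat V hpos η
  have h1 : ∀ x, tilted phat V η x * Real.log (tilted phat V η x / phat x) =
      -η * (phat x * Real.exp (-η * V x) * V x / partitionZ phat V η)
      - phat x * Real.exp (-η * V x) * (Real.log (partitionZ phat V η) / partitionZ phat V η) := by
    intro x
    have h2 : tilted phat V η x / phat x = Real.exp (-η * V x) / partitionZ phat V η := by
      have := (hpos x).ne'
      unfold tilted
      field_simp
    rw [h2, Real.log_div (Real.exp_pos _).ne' hZ.ne', Real.log_exp]
    unfold tilted
    ring
  unfold klDiv
  rw [Finset.sum_congr rfl (fun x _ => h1 x), Finset.sum_sub_distrib, ← Finset.mul_sum,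
    ← Finset.sum_div, ← Finset.sum_mul]
  change _ - partitionZ phat V η * _ = _
  field_simp

lemma hasDerivAt_weighted {X : Type*} [Fintype X] (w V : X → ℝ) (η : ℝ) :
    HasDerivAt (fun t => ∑ x, w x * Real.exp (-t * V x))
      (-∑ x, w x * Real.exp (-η * V x) * V x) η := by
  rw [← Finset.sum_neg_distrib]
  apply HasDerivAt.fun_sum
  intro x _
  have h : HasDerivAt (fun t : ℝ => -t * V x) (-1 * V x) η :=
    ((hasDerivAt_id η).neg).mul_const (V x)
  refine (h.exp.const_mul (w x)).congr_deriv ?_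
  ring

lemma hasDerivAt_klDiv {X : Type*} [Fintype X] [Nonempty X] (phat V : X → ℝ)
    (hpos : ∀ x, 0 < phat x) (η : ℝ) :
    HasDerivAt (fun t => klDiv (tilted phat V t) phat)
      (η * varUnder (tilted phat V η) V) η := by
  have hZ := partitionZ_pos' phat V hpos η
  have hf : (fun t => klDiv (tilted phat V t) phat) = fun t =>
      -t * ((∑ x, phat x * Real.exp (-t * V x) * V x) / partitionZ phat V t)
        - Real.log (partitionZ phat V t) := funext (klDiv_tilted_eq phat V hpos)
  rw [hf]
  have dZ : HasDerivAt (fun t => partitionZ phat V t) _ η := hasDerivAt_weighted phat V η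
  have dM : HasDerivAt (fun t => ∑ x, phat x * Real.exp (-t * V x) * V x)
      (-∑ x, phat x * Real.exp (-η * V x) * V x ^ 2) η := by
    convert hasDerivAt_weighted (fun x => phat x * V x) V η using 1
    · funext t
      exact Finset.sum_congr rfl (fun x _ => by ring)
    · congr 1
      exact Finset.sum_congr rfl (fun x _ => by ring)
  have hn : HasDerivAt (fun t : ℝ => -t) (-1) η := (hasDerivAt_id η).neg
  have hall := (hn.mul (dM.div dZ hZ.ne')).sub (dZ.log hZ.ne')
  refine hall.congr_deriv ?_
  have e1 : ∑ x, tilted phat V η x * V x ^ 2 =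
      (∑ x, phat x * Real.exp (-η * V x) * V x ^ 2) / partitionZ phat V η := by
    rw [Finset.sum_div]
    exact Finset.sum_congr rfl (fun x _ => by unfold tilted; ring)
  have e2 : ∑ x, tilted phat V η x * V x =
      (∑ x, phat x * Real.exp (-η * V x) * V x) / partitionZ phat V η := by
    rw [Finset.sum_div]
    exact Finset.sum_congr rfl (fun x _ => by unfold tilted; ring)
  unfold varUnder
  rw [e1, e2]
  simp only [Pi.div_apply]
  field_simp
  ring

lemma kl_growth {X : Type*} [Fintype X] [Nonempty X] (phat V : X → ℝ)
    (hpos : ∀ x, 0 < phat x) (ηmin σmin a b : ℝ) (hηmin : 0 < ηmin)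
    (ha : ηmin ≤ a) (hab : a ≤ b)
    (hvar : ∀ ξ ∈ Set.Icc a b, σmin ^ 2 ≤ varUnder (tilted phat V ξ) V) :
    (b - a) * (ηmin * σmin ^ 2) ≤
      klDiv (tilted phat V b) phat - klDiv (tilted phat V a) phat := by
  rcases hab.eq_or_lt with rfl | hlt
  · simp
  obtain ⟨c, hc, he⟩ := exists_hasDerivAt_eq_slope (fun t => klDiv (tilted phat V t) phat)
    (fun t => t * varUnder (tilted phat V t) V) hlt
    (fun t _ => (hasDerivAt_klDiv phat V hpos t).continuousAt.continuousWithinAt)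
    (fun t _ => hasDerivAt_klDiv phat V hpos t)
  have hba : 0 < b - a := sub_pos.2 hlt
  rw [eq_div_iff hba.ne'] at he
  rw [← he, mul_comm]
  have := hvar c (Set.Ioo_subset_Icc_self hc)
  have hc1 : ηmin ≤ c := ha.trans hc.1.le
  exact mul_le_mul_of_nonneg_right
    (mul_le_mul hc1 this (sq_nonneg _) (hηmin.le.trans hc1)) hba.le

/-- KL residual controls the temperature error. If
`r(η) = ε − D(p_η‖p̂)`, `η̂, η* ≥ η_min > 0`, `Var_{p_ξ}(V) ≥ σ_min²` for all `ξ`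
in the closed interval between `η̂` and `η*`, and `r(η*) = 0`, then
`|η̂ − η*| ≤ |ε − D(p_{η̂}‖p̂)| / (η_min σ_min²)`. -/
theorem kl_residual_bound {X : Type*} [Fintype X] [Nonempty X]
    (phat : X → ℝ) (hpos : ∀ x, 0 < phat x) (hsum : ∑ x, phat x = 1)
    (V : X → ℝ) (ε : ℝ) (hε : 0 ≤ ε)
    (ηmin σmin : ℝ) (hηmin : 0 < ηmin) (hσmin : 0 < σmin)
    (ηhat ηstar : ℝ) (hηhat : ηmin ≤ ηhat) (hηstar : ηmin ≤ ηstar)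
    (hvar : ∀ ξ ∈ Set.uIcc ηhat ηstar, σmin ^ 2 ≤ varUnder (tilted phat V ξ) V)
    (hroot : ε - klDiv (tilted phat V ηstar) phat = 0) :
    |ηhat - ηstar| ≤ |ε - klDiv (tilted phat V ηhat) phat| / (ηmin * σmin ^ 2) := by
  rw [le_div_iff₀ (by positivity)]
  have hε' : ε = klDiv (tilted phat V ηstar) phat := sub_eq_zero.1 hroot
  rcases le_total ηhat ηstar with h | h
  · rw [Set.uIcc_of_le h] at hvar
    have := kl_growth phat V hpos ηmin σmin ηhat ηstar hηmin hηhat h hvar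
    rw [abs_of_nonpos (sub_nonpos.2 h), neg_sub]
    rw [hε']
    exact this.trans (le_abs_self _)
  · rw [Set.uIcc_of_ge h] at hvar
    have := kl_growth phat V hpos ηmin σmin ηstar ηhat hηmin hηstar h hvar
    rw [abs_of_nonneg (sub_nonneg.2 h)]
    rw [hε', abs_sub_comm]
    exact this.trans (le_abs_self _)
end

section
/- Let S and A be nonempty finite sets, let p̂ be a transition kernel with p̂(·|s,a) ∈ Δ_S and p̂(s'|s,a) > 0 for all s,a,s', let r : S×A → ℝ, γ ∈ (0,1), ε ≥ 0, and let η̂ : S×A → (0,∞) be an arbitrary function. Define the approximate robust operator (T̃V)(s) = max_{a ∈ A} ( r(s,a) + γ·( −(1/η̂(s,a))·log( Σ_{s'} p̂(s'|s,a)·e^{−η̂(s,a)·V(s')} ) − ε/η̂(s,a) ) ). Then T̃ is a γ-contraction in the supremum norm: ‖T̃V − T̃W‖∞ ≤ γ·‖V − W‖∞ for all V, W : S → ℝ; in particular T̃ has a unique fixed point. -/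
/-- Approximate robust Bellman operator with plug-in dual temperature `η̂(s,a)`:
`(T̃V)(s) = max_a ( r(s,a) + γ( −(1/η̂(s,a)) log Σ_{s'} p̂(s'|s,a) e^{−η̂(s,a)V(s')}
  − ε/η̂(s,a) ) )`. -/
noncomputable def approxRobustOp {S A : Type*} [Fintype S] [Fintype A] [Nonempty A]
    (phat : S → A → S → ℝ) (r : S → A → ℝ) (γ ε : ℝ) (ηhat : S → A → ℝ)
    (V : S → ℝ) : S → ℝ :=
  fun s => Finset.univ.sup' Finset.univ_nonempty (fun a =>
    r s a + γ * (-(1 / ηhat s a) *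
      Real.log (∑ s', phat s a s' * Real.exp (-(ηhat s a) * V s')) - ε / ηhat s a))

theorem approxRobustOp_le_add {S A : Type*} [Fintype S] [Fintype A]
    [Nonempty S] [Nonempty A]
    (phat : S → A → S → ℝ)
    (hphat_pos : ∀ s a s', 0 < phat s a s')
    (r : S → A → ℝ) (γ : ℝ) (hγ0 : 0 < γ)
    (ε : ℝ)
    (ηhat : S → A → ℝ) (hηhat : ∀ s a, 0 < ηhat s a)
    (V W : S → ℝ) (d : ℝ) (h : ∀ s, V s ≤ W s + d) (s : S) :
    approxRobustOp phat r γ ε ηhat V s ≤ approxRobustOp phat r γ ε ηhat W s + γ * d := by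
  unfold approxRobustOp
  apply Finset.sup'_le
  intro a _
  refine le_trans ?_ (add_le_add_left (Finset.le_sup' (fun a =>
    r s a + γ * (-(1 / ηhat s a) *
      Real.log (∑ s', phat s a s' * Real.exp (-(ηhat s a) * W s')) - ε / ηhat s a))
      (Finset.mem_univ a)) (γ * d))
  have hη := hηhat s a
  have hpos : ∀ U : S → ℝ, 0 < ∑ s', phat s a s' * Real.exp (-(ηhat s a) * U s') := fun U =>
    Finset.sum_pos (fun s' _ => mul_pos (hphat_pos s a s') (Real.exp_pos _))
      Finset.univ_nonempty
  have hle : Real.exp (-(ηhat s a) * d) * (∑ s', phat s a s' * Real.exp (-(ηhat s a) * W s'))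
      ≤ ∑ s', phat s a s' * Real.exp (-(ηhat s a) * V s') := by
    rw [Finset.mul_sum]
    apply Finset.sum_le_sum
    intro s' _
    rw [mul_left_comm, ← Real.exp_add]
    apply mul_le_mul_of_nonneg_left _ (hphat_pos s a s').le
    apply Real.exp_le_exp.mpr
    nlinarith [h s']
  have hlog := Real.log_le_log (mul_pos (Real.exp_pos _) (hpos W)) hle
  rw [Real.log_mul (Real.exp_pos _).ne' (hpos W).ne', Real.log_exp] at hlog
  have h2 := mul_le_mul_of_nonneg_left hlog (one_div_pos.mpr hη).le
  have h3 : 1 / ηhat s a * (-(ηhat s a) * d) = -d := by field_simp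
  rw [mul_add, h3] at h2
  have h4 := mul_le_mul_of_nonneg_left h2 hγ0.le
  linarith

/-- for an arbitrary positive temperature function `η̂`, the
approximate robust operator is a `γ`-contraction in the supremum norm; in
particular it has a unique fixed point. -/
theorem approxRobustOp_contraction {S A : Type*} [Fintype S] [Fintype A]
    [Nonempty S] [Nonempty A]
    (phat : S → A → S → ℝ)
    (hphat_pos : ∀ s a s', 0 < phat s a s')
    (hphat_sum : ∀ s a, ∑ s', phat s a s' = 1)
    (r : S → A → ℝ) (γ : ℝ) (hγ0 : 0 < γ) (hγ1 : γ < 1)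
    (ε : ℝ) (hε : 0 ≤ ε)
    (ηhat : S → A → ℝ) (hηhat : ∀ s a, 0 < ηhat s a) :
    (∀ V W : S → ℝ,
      Finset.univ.sup' Finset.univ_nonempty (fun s =>
          |approxRobustOp phat r γ ε ηhat V s - approxRobustOp phat r γ ε ηhat W s|) ≤
        γ * Finset.univ.sup' Finset.univ_nonempty (fun s => |V s - W s|)) ∧
    (∃! Vf : S → ℝ, approxRobustOp phat r γ ε ηhat Vf = Vf) := by
  have key : ∀ V W : S → ℝ, ∀ d : ℝ, (∀ s, |V s - W s| ≤ d) → ∀ s,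
      |approxRobustOp phat r γ ε ηhat V s - approxRobustOp phat r γ ε ηhat W s| ≤ γ * d := by
    intro V W d h s
    have h1 := approxRobustOp_le_add phat hphat_pos r γ hγ0 ε ηhat hηhat V W d
      (fun s => by linarith [(abs_le.mp (h s)).2]) s
    have h2 := approxRobustOp_le_add phat hphat_pos r γ hγ0 ε ηhat hηhat W V d
      (fun s => by linarith [(abs_le.mp (h s)).1]) s
    exact abs_le.mpr ⟨by linarith, by linarith⟩
  refine ⟨fun V W => Finset.sup'_le _ _ fun s _ => key V W _
    (fun s => Finset.le_sup' (fun s => |V s - W s|) (Finset.mem_univ s)) s, ?_⟩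
  have hc : ContractingWith ⟨γ, hγ0.le⟩ (approxRobustOp phat r γ ε ηhat) := by
    refine ⟨by exact_mod_cast hγ1, LipschitzWith.of_dist_le_mul fun V W => ?_⟩
    refine (dist_pi_le_iff (mul_nonneg hγ0.le dist_nonneg)).mpr fun s => ?_
    exact key V W (dist V W) (fun s => dist_le_pi_dist V W s) s
  exact ⟨hc.fixedPoint, hc.fixedPoint_isFixedPt, fun y hy => hc.fixedPoint_unique hy⟩
end
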